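/- arXiv:1704.00221 — 6 statements merged into one kernel-verified Lean document; each statement's English description precedes it below -/
import Mathlib

section
/- Let f(x,y) = f₂x² + f₁xy + f₀y² be a binary quadratic form with integer coefficients which is primitive (gcd(f₂, f₁, f₀) = 1) and irreducible as a polynomial over ℚ. If x, y, u, v are integers with f(x,y) = f(u,v), then there exists an invertible 2×2 matrix T with rational entries such that f(t₁s + t₂t, t₃s + t₄t) = f(s,t) for all rational s, t (where T = [[t₁, t₂],[t₃, t₄]]) and T·(x,y)ᵀ = (u,v)ᵀ. In other words, every integer representable by f is essentially represented. -/
/-!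
Write `f = (a, b, c)` and `D = b² - 4ac`. Irreducibility means that `f` has no nontrivial rational
zero, since such a zero splits off a linear factor (`eq_zero_of_form_eq_zero`). The matrix
`M = [[-b, -2c], [2a, b]]` satisfies `M² = D`, and `f ∘ (p + q M) = (p² - D q²) f`: this is
multiplication by `p + q √D` in the quadratic algebra of which `f` is a multiple of the norm form.
If `n = f(x, y) ≠ 0`, then `ξ = (x, y)` and `M ξ` form a basis of `ℚ²`, with determinant `2n`, so
`(u, v) = p ξ + q M ξ` for unique `p`, `q`. Comparing the values of `f` gives `p² - D q² = 1`, so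
`T = p + q M` is an automorphism of `f` of determinant `1` (`exists_automorph`). If `n = 0`, both
vectors vanish and the identity matrix works.
-/

open MvPolynomial

/-- A polynomial in two variables that vanishes at the origin is not a unit. -/
theorem not_isUnit_of_eval_zero (P : MvPolynomial (Fin 2) ℚ)
    (h : eval (fun _ => (0 : ℚ)) P = 0) : ¬ IsUnit P := by
  intro hP
  have h' := hP.map (eval (fun _ : Fin 2 => (0 : ℚ)))
  rw [h] at h'
  exact not_isUnit_zero h'

theorem eq_zero_of_form_eq_zero (a b c : ℚ)
    (hirr : Irreducible
      (C a * X 0 ^ 2 + C b * X 0 * X 1 + C c * X 1 ^ 2 : MvPolynomial (Fin 2) ℚ))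
    (p q : ℚ) (h : a * p ^ 2 + b * p * q + c * q ^ 2 = 0) : p = 0 ∧ q = 0 := by
  have key : ∀ α β γ δ : ℚ, a = α * γ → b = α * δ + β * γ → c = β * δ → False := by
    intro α β γ δ ha hb hc
    have hfac : (C a * X 0 ^ 2 + C b * X 0 * X 1 + C c * X 1 ^ 2 : MvPolynomial (Fin 2) ℚ)
        = (C α * X 0 + C β * X 1) * (C γ * X 0 + C δ * X 1) := by
      rw [ha, hb, hc]
      simp only [C_add, C_mul]
      ring
    rcases hirr.isUnit_or_isUnit hfac with hu | hu
    · exact not_isUnit_of_eval_zero _ (by simp) hu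
    · exact not_isUnit_of_eval_zero _ (by simp) hu
  by_cases hq : q = 0
  · subst hq
    refine ⟨?_, rfl⟩
    by_contra hp
    have ha : a = 0 := by simpa [hp] using h
    exact (key 0 1 b c (by simp [ha]) (by simp) (by simp)).elim
  · -- The zero `(p : q)` gives the linear factor `q X - p Y`.
    refine (key q (-p) (a / q) ((b + p * a / q) / q) ?_ ?_ ?_).elim
    · field_simp
    · field_simp
      ring
    · field_simp
      linear_combination h

/-- Two vectors with the same nonzero value under a rational binary quadratic form are related by
an automorphism of the form. -/
theorem exists_automorph (a b c x y u v : ℚ)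
    (hn : a * x ^ 2 + b * x * y + c * y ^ 2 ≠ 0)
    (hrep : a * x ^ 2 + b * x * y + c * y ^ 2 = a * u ^ 2 + b * u * v + c * v ^ 2) :
    ∃ t₁ t₂ t₃ t₄ : ℚ,
      t₁ * t₄ - t₂ * t₃ ≠ 0 ∧
      (∀ s t : ℚ,
        a * (t₁ * s + t₂ * t) ^ 2 + b * (t₁ * s + t₂ * t) * (t₃ * s + t₄ * t)
            + c * (t₃ * s + t₄ * t) ^ 2
          = a * s ^ 2 + b * s * t + c * t ^ 2) ∧
      t₁ * x + t₂ * y = u ∧ t₃ * x + t₄ * y = v := by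
  obtain ⟨n, hn'⟩ : ∃ n, n = a * x ^ 2 + b * x * y + c * y ^ 2 := ⟨_, rfl⟩
  rw [← hn'] at hn hrep
  -- Cramer's rule for `(u, v) = p ξ + q M ξ`.
  obtain ⟨p, hp⟩ : ∃ p, 2 * n * p = u * (2 * a * x + b * y) + v * (b * x + 2 * c * y) :=
    ⟨(u * (2 * a * x + b * y) + v * (b * x + 2 * c * y)) / (2 * n), by field_simp⟩
  obtain ⟨q, hq⟩ : ∃ q, 2 * n * q = x * v - y * u :=
    ⟨(x * v - y * u) / (2 * n), by field_simp⟩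
  have hn2 : 2 * n ≠ 0 := mul_ne_zero two_ne_zero hn
  have hdet : p ^ 2 - (b ^ 2 - 4 * a * c) * q ^ 2 = 1 := by
    apply mul_left_cancel₀ (pow_ne_zero 2 hn2)
    -- Multiplicativity of the norm: the left side is `4 f(x, y) f(u, v)`.
    calc (2 * n) ^ 2 * (p ^ 2 - (b ^ 2 - 4 * a * c) * q ^ 2)
        = (2 * n * p) ^ 2 - (b ^ 2 - 4 * a * c) * (2 * n * q) ^ 2 := by ring
      _ = 4 * (a * x ^ 2 + b * x * y + c * y ^ 2) * (a * u ^ 2 + b * u * v + c * v ^ 2) := by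
        rw [hp, hq]
        ring
      _ = (2 * n) ^ 2 * 1 := by
        rw [← hn', ← hrep]
        ring
  refine ⟨p - b * q, -2 * c * q, 2 * a * q, p + b * q, ?_, ?_, ?_, ?_⟩
  · have h1 : (p - b * q) * (p + b * q) - -2 * c * q * (2 * a * q) = 1 := by
      linear_combination hdet
    rw [h1]
    exact one_ne_zero
  · intro s t
    linear_combination (a * s ^ 2 + b * s * t + c * t ^ 2) * hdet
  · apply mul_left_cancel₀ hn2
    linear_combination x * hp + (-b * x - 2 * c * y) * hq - 2 * u * hn'
  · apply mul_left_cancel₀ hn2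
    linear_combination y * hp + (2 * a * x + b * y) * hq - 2 * v * hn'

/-- Every integer representable by a primitive irreducible binary quadratic form is
essentially represented: any two integral representations are related by a rational
automorphism of the form. -/
theorem essentially_represented (f₂ f₁ f₀ : ℤ)
    (hprim : Int.gcd (Int.gcd f₂ f₁) f₀ = 1)
    (hirr : Irreducible
      (C (f₂ : ℚ) * X 0 ^ 2 + C (f₁ : ℚ) * X 0 * X 1 + C (f₀ : ℚ) * X 1 ^ 2 :
        MvPolynomial (Fin 2) ℚ))
    (x y u v : ℤ)
    (hrep : f₂ * x ^ 2 + f₁ * x * y + f₀ * y ^ 2 = f₂ * u ^ 2 + f₁ * u * v + f₀ * v ^ 2) :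
    ∃ t₁ t₂ t₃ t₄ : ℚ,
      t₁ * t₄ - t₂ * t₃ ≠ 0 ∧
      (∀ s t : ℚ,
        (f₂ : ℚ) * (t₁ * s + t₂ * t) ^ 2 + (f₁ : ℚ) * (t₁ * s + t₂ * t) * (t₃ * s + t₄ * t)
            + (f₀ : ℚ) * (t₃ * s + t₄ * t) ^ 2
          = (f₂ : ℚ) * s ^ 2 + (f₁ : ℚ) * s * t + (f₀ : ℚ) * t ^ 2) ∧
      t₁ * (x : ℚ) + t₂ * (y : ℚ) = (u : ℚ) ∧ t₃ * (x : ℚ) + t₄ * (y : ℚ) = (v : ℚ) := by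
  have hrep' : (f₂ : ℚ) * x ^ 2 + f₁ * x * y + f₀ * y ^ 2
      = f₂ * u ^ 2 + f₁ * u * v + f₀ * v ^ 2 := by exact_mod_cast hrep
  by_cases hn : (f₂ : ℚ) * x ^ 2 + f₁ * x * y + f₀ * y ^ 2 = 0
  · obtain ⟨hx, hy⟩ := eq_zero_of_form_eq_zero _ _ _ hirr _ _ hn
    obtain ⟨hu, hv⟩ := eq_zero_of_form_eq_zero _ _ _ hirr _ _ (hrep'.symm.trans hn)
    exact ⟨1, 0, 0, 1, by norm_num, fun s t => by ring, by simp [hx, hu], by simp [hy, hv]⟩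
  · exact exists_automorph _ _ _ _ _ _ _ hn hrep'
end

section
/- Let δ be a positive rational number with 4δ ∈ ℤ, and let E_δ be the plane curve x² + δy² = 1. Then the set of rational points of E_δ consists of the point (1, 0) together with exactly the points of the form ((δp² − q²)/(δp² + q²), 2pq/(δp² + q²)) where p, q are integers with q > 0 and gcd(p, q) = 1. -/
/-!
The ellipse is a conic with the rational point `(1, 0)`. Projecting from that point, a rational point
`(x, y)` with `x ≠ 1` is determined by the rational number `y / (1 - x)`, and writing the latter as
`p / q` in lowest terms gives the parametrization. The converse is the identity
`(δp² - q²)² + δ(2pq)² = (δp² + q²)²`, where `δp² + q² > 0` because `δ > 0` and `q ≠ 0`.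
-/


/-- Parametrization of the rational points of the ellipse `x² + δy² = 1`. -/
theorem rational_points_ellipse (δ : ℚ) (hδ : 0 < δ) (hint : ∃ k : ℤ, (k : ℚ) = 4 * δ) :
    ∀ x y : ℚ, x ^ 2 + δ * y ^ 2 = 1 ↔
      ((x = 1 ∧ y = 0) ∨
        ∃ p q : ℤ, 0 < q ∧ Int.gcd p q = 1 ∧
          x = (δ * (p : ℚ) ^ 2 - (q : ℚ) ^ 2) / (δ * (p : ℚ) ^ 2 + (q : ℚ) ^ 2) ∧
          y = (2 * (p : ℚ) * (q : ℚ)) / (δ * (p : ℚ) ^ 2 + (q : ℚ) ^ 2)) := by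
  intro x y
  constructor
  · intro h
    by_cases hx : x = 1
    · left
      subst hx
      have h0 : δ * y ^ 2 = 0 := by linarith
      simpa [hδ.ne'] using h0
    · right
      have hx' : 1 - x ≠ 0 := sub_ne_zero.mpr (Ne.symm hx)
      set r : ℚ := y / (1 - x) with hr
      have hq : (0 : ℚ) < (r.den : ℚ) := by exact_mod_cast r.den_pos
      have hpq : y * r.den = r.num * (1 - x) := by
        have h1 : (r.num : ℚ) / r.den = y / (1 - x) := by rw [Rat.num_div_den]
        rw [div_eq_div_iff hq.ne' hx'] at h1
        exact h1.symm
      refine ⟨r.num, r.den, by exact_mod_cast r.den_pos, r.reduced, ?_⟩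
      generalize r.num = p at *
      generalize r.den = q at *
      push_cast
      have hD : δ * (p : ℚ) ^ 2 + (q : ℚ) ^ 2 ≠ 0 := by positivity
      have key : δ * (p : ℚ) ^ 2 * (1 - x) = (q : ℚ) ^ 2 * (1 + x) := by
        apply mul_right_cancel₀ hx'
        linear_combination (-δ * (p * (1 - x) + y * q)) * hpq + (q : ℚ) ^ 2 * h
      constructor
      · rw [eq_div_iff hD]
        linear_combination -key
      · rw [eq_div_iff hD]
        apply mul_right_cancel₀ hx'
        linear_combination y * key + 2 * (q : ℚ) * hpq
  · rintro (⟨rfl, rfl⟩ | ⟨p, q, hq, -, rfl, rfl⟩)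
    · ring
    · have hq' : (0 : ℚ) < q := by exact_mod_cast hq
      have hD : δ * (p : ℚ) ^ 2 + (q : ℚ) ^ 2 ≠ 0 := by positivity
      field_simp
      ring
end

section
/- Let f(x,y) = f₂x² + f₁xy + f₀y² be a positive definite binary quadratic form with integer coefficients (f₂ > 0 and f₁² − 4f₂f₀ < 0), and set δ = (4f₂f₀ − f₁²)/4 > 0. For every real number t, the matrix T_f(t) = [[cos t + f₁ sin t/(2√δ), f₀ sin t/√δ], [−f₂ sin t/√δ, cos t − f₁ sin t/(2√δ)]] has determinant 1 and satisfies f(T_f(t)·(x,y)ᵀ) = f(x,y) for all real x, y. -/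
/-!
Put `C = cos t` and `u = sin t / √δ`. The matrix is `T = C • 1 + u • J` with
`J = [[f₁/2, f₀], [-f₂, -f₁/2]]`, where `tr J = 0` and `det J = δ`, so `J² = -δ • 1`. If `M` is the
Gram matrix of `f`, then `M J` is skew-symmetric, hence `Tᵀ M T = (C² + δ u²) • M`, and likewise
`det T = C² + δ u²`. Both claims thus reduce to `C² + δ u² = cos² t + sin² t = 1`.
-/

/-- For a positive definite binary quadratic form `f`, the rotation matrix `T_f(t)` has
determinant one and is an automorphism of `f` over the reals. -/
theorem rotation_automorphism_pos_def (f₂ f₁ f₀ : ℤ) (hpos : 0 < f₂)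
    (hdisc : f₁ ^ 2 - 4 * f₂ * f₀ < 0)
    (δ : ℝ) (hδ : δ = ((4 * f₂ * f₀ - f₁ ^ 2 : ℤ) : ℝ) / 4)
    (t : ℝ) (a b c d : ℝ)
    (ha : a = Real.cos t + (f₁ : ℝ) * Real.sin t / (2 * Real.sqrt δ))
    (hb : b = (f₀ : ℝ) * Real.sin t / Real.sqrt δ)
    (hc : c = -(f₂ : ℝ) * Real.sin t / Real.sqrt δ)
    (hd : d = Real.cos t - (f₁ : ℝ) * Real.sin t / (2 * Real.sqrt δ)) :
    a * d - b * c = 1 ∧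
    ∀ x y : ℝ,
      (f₂ : ℝ) * (a * x + b * y) ^ 2 + (f₁ : ℝ) * (a * x + b * y) * (c * x + d * y)
          + (f₀ : ℝ) * (c * x + d * y) ^ 2
        = (f₂ : ℝ) * x ^ 2 + (f₁ : ℝ) * x * y + (f₀ : ℝ) * y ^ 2 := by
  have hδ' : δ = f₂ * f₀ - (f₁ : ℝ) ^ 2 / 4 := by
    rw [hδ]; push_cast; ring
  have hδ0 : 0 < δ := by
    have h : (0 : ℝ) < ((4 * f₂ * f₀ - f₁ ^ 2 : ℤ) : ℝ) := by
      exact_mod_cast (by linarith : (0 : ℤ) < 4 * f₂ * f₀ - f₁ ^ 2)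
    rw [hδ]; positivity
  obtain ⟨u, hu⟩ : ∃ u, u = Real.sin t / √δ := ⟨_, rfl⟩
  have key : Real.cos t ^ 2 + (f₂ * f₀ - (f₁ : ℝ) ^ 2 / 4) * u ^ 2 = 1 := by
    rw [← hδ', hu, div_pow, Real.sq_sqrt hδ0.le, mul_div_cancel₀ _ hδ0.ne', Real.cos_sq_add_sin_sq]
  have ha' : a = Real.cos t + f₁ * u / 2 := by rw [ha, hu]; ring
  have hb' : b = f₀ * u := by rw [hb, hu]; ring
  have hc' : c = -f₂ * u := by rw [hc, hu]; ring
  have hd' : d = Real.cos t - f₁ * u / 2 := by rw [hd, hu]; ring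
  rw [ha', hb', hc', hd']
  refine ⟨by linear_combination key, fun x y => ?_⟩
  linear_combination ((f₂ : ℝ) * x ^ 2 + f₁ * x * y + f₀ * y ^ 2) * key
end

section
/- Let f(x,y) = f₂x² + f₁xy + f₀y² be a positive definite binary quadratic form with integer coefficients (f₂ > 0 and f₁² − 4f₂f₀ < 0), and set δ = (4f₂f₀ − f₁²)/4 > 0. A 2×2 matrix T with rational entries satisfies det T = 1 and f(T·(x,y)ᵀ) = f(x,y) for all x, y if and only if there exist rational numbers a, b with a² + δb² = 1 such that T = [[a + f₁b/2, f₀b], [−f₂b, a − f₁b/2]]. Consequently the special rational automorphisms of f are in bijection with the rational points of the curve x² + δy² = 1. -/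
/-!
Let `F` be the symmetric Gram matrix of `f`. When `det T = 1`, the condition `Tᵀ F T = F` reads
`F T = (Tᵀ)⁻¹ F`, and `(Tᵀ)⁻¹` is linear in the entries of `T`, so the quadratic condition becomes
a linear system. As `f₂ ≠ 0`, its first row determines `T` from its trace `2a` and its lower left
entry `-f₂ b`, which gives the stated shape; for matrices of that shape `det T = a² + δ b²`.
Conversely, such a matrix satisfies `f ∘ T = (a² + δ b²) f` identically.
-/


/-- The special rational automorphisms of a positive definite binary quadratic form `f`
are exactly the matrices `[[a + f₁b/2, f₀b], [−f₂b, a − f₁b/2]]` with `a² + δb² = 1`;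
in particular they are in bijection with the rational points of `x² + δy² = 1`. -/
theorem special_automorphisms_pos_def (f₂ f₁ f₀ : ℤ) (hpos : 0 < f₂)
    (hdisc : f₁ ^ 2 - 4 * f₂ * f₀ < 0)
    (δ : ℚ) (hδ : δ = ((4 * f₂ * f₀ - f₁ ^ 2 : ℤ) : ℚ) / 4)
    (t₁ t₂ t₃ t₄ : ℚ) :
    (t₁ * t₄ - t₂ * t₃ = 1 ∧
      ∀ x y : ℚ,
        (f₂ : ℚ) * (t₁ * x + t₂ * y) ^ 2 + (f₁ : ℚ) * (t₁ * x + t₂ * y) * (t₃ * x + t₄ * y)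
            + (f₀ : ℚ) * (t₃ * x + t₄ * y) ^ 2
          = (f₂ : ℚ) * x ^ 2 + (f₁ : ℚ) * x * y + (f₀ : ℚ) * y ^ 2) ↔
    ∃ a b : ℚ, a ^ 2 + δ * b ^ 2 = 1 ∧
      t₁ = a + (f₁ : ℚ) * b / 2 ∧ t₂ = (f₀ : ℚ) * b ∧
      t₃ = -(f₂ : ℚ) * b ∧ t₄ = a - (f₁ : ℚ) * b / 2 := by
  have hp : (f₂ : ℚ) ≠ 0 := by exact_mod_cast hpos.ne'
  push_cast at hδ
  constructor
  · rintro ⟨D, h⟩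
    have E1 := h 1 0
    have E3 := h 0 1
    have E2 := h 1 1
    -- The (1,1) and (1,2) entries of `F T = (Tᵀ)⁻¹ F`.
    have L1 : (f₂ : ℚ) * (t₁ - t₄) + f₁ * t₃ = 0 := by
      linear_combination t₄ * E1 - t₃ / 2 * (E2 - E1 - E3) - (f₂ * t₁ + f₁ * t₃ / 2) * D
    have L2 : (f₂ : ℚ) * t₂ + f₀ * t₃ = 0 := by
      linear_combination t₄ / 2 * (E2 - E1 - E3) - t₃ * E3 - (f₂ * t₂ + f₁ * t₄ / 2) * D
    -- `b` is read off from the lower left entry, `a` from the trace.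
    obtain ⟨b, hb⟩ : ∃ b : ℚ, t₃ = -(f₂ : ℚ) * b := ⟨-t₃ / f₂, by field_simp⟩
    have M1 : t₁ - t₄ = f₁ * b :=
      mul_left_cancel₀ hp (by linear_combination L1 - f₁ * hb)
    have M2 : t₂ = f₀ * b :=
      mul_left_cancel₀ hp (by linear_combination L2 - f₀ * hb)
    have h₁ : t₁ = (t₁ + t₄) / 2 + f₁ * b / 2 := by linear_combination M1 / 2
    have h₄ : t₄ = (t₁ + t₄) / 2 - f₁ * b / 2 := by linear_combination -M1 / 2
    refine ⟨(t₁ + t₄) / 2, b, ?_, h₁, M2, hb, h₄⟩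
    rw [M2, hb] at D
    linear_combination D + b ^ 2 * hδ + (t₁ - t₄ + f₁ * b) / 4 * M1
  · rintro ⟨a, b, hab, rfl, rfl, rfl, rfl⟩
    subst hδ
    refine ⟨by linear_combination hab, fun x y => ?_⟩
    -- `f ∘ T = (det T) f` holds identically for matrices of this shape.
    linear_combination (f₂ * x ^ 2 + f₁ * x * y + f₀ * y ^ 2) * hab
end

section
/- Let f(x,y) = f₂x² + f₁xy + f₀y² be a binary quadratic form with rational coefficients and nonzero discriminant D = f₁² − 4f₂f₀. Suppose x, y, u, v are rational numbers and h is a nonzero rational number with f(x,y) = f(u,v) = h. Define a = (2f₂ux + f₁(uy + vx) + 2f₀vy)/(2h) and b = (uy − vx)/h. Then a² − (D/4)·b² = 1, and the matrix T = [[a + f₁b/2, f₀b], [−f₂b, a − f₁b/2]] has determinant 1, satisfies f(T·(s,t)ᵀ) = f(s,t) for all rational s, t, and satisfies T·(x,y)ᵀ = (u,v)ᵀ. In particular, T is an explicit rational automorphism of f carrying the representation (x,y) of h to the representation (u,v). -/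
/-!
The polar form `B` of `f`, given by `B = 2f₂ux + f₁(uy + vx) + 2f₀vy`, satisfies the composition
identity `B² - D (uy - vx)² = 4 f(x,y) f(u,v)`. With both values equal to `h`, dividing by `4h²`
gives the Pell-type equation `a² - (D/4) b² = 1`. The left side is `det T`, and `f ∘ T = det T · f`
holds identically in `a` and `b`, so `T` preserves `f`. That `T` carries `(x, y)` to `(u, v)` is
the identity `h T (x, y) = f(x,y) (u, v)`.
-/

/-- Explicit rational automorphism carrying one rational representation of a nonzero
rational number `h` by a binary quadratic form to another. -/
theorem explicit_automorphism (f₂ f₁ f₀ D : ℚ) (hD : D = f₁ ^ 2 - 4 * f₂ * f₀)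
    (hD0 : D ≠ 0) (x y u v h : ℚ) (hh : h ≠ 0)
    (hxy : f₂ * x ^ 2 + f₁ * x * y + f₀ * y ^ 2 = h)
    (huv : f₂ * u ^ 2 + f₁ * u * v + f₀ * v ^ 2 = h)
    (a b : ℚ)
    (ha : a = (2 * f₂ * u * x + f₁ * (u * y + v * x) + 2 * f₀ * v * y) / (2 * h))
    (hb : b = (u * y - v * x) / h) :
    a ^ 2 - (D / 4) * b ^ 2 = 1 ∧
    (a + f₁ * b / 2) * (a - f₁ * b / 2) - (f₀ * b) * (-f₂ * b) = 1 ∧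
    (∀ s t : ℚ,
      f₂ * ((a + f₁ * b / 2) * s + f₀ * b * t) ^ 2
          + f₁ * ((a + f₁ * b / 2) * s + f₀ * b * t) * (-f₂ * b * s + (a - f₁ * b / 2) * t)
          + f₀ * (-f₂ * b * s + (a - f₁ * b / 2) * t) ^ 2
        = f₂ * s ^ 2 + f₁ * s * t + f₀ * t ^ 2) ∧
    (a + f₁ * b / 2) * x + f₀ * b * y = u ∧
    -f₂ * b * x + (a - f₁ * b / 2) * y = v := by
  have hB : 2 * h * a = 2 * f₂ * u * x + f₁ * (u * y + v * x) + 2 * f₀ * v * y := by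
    rw [ha]; field_simp
  have hW : h * b = u * y - v * x := by
    rw [hb]; field_simp
  have key : a ^ 2 - (D / 4) * b ^ 2 = 1 := by
    have h4 : (4 * h ^ 2 : ℚ) ≠ 0 := by positivity
    apply mul_left_cancel₀ h4
    calc 4 * h ^ 2 * (a ^ 2 - (D / 4) * b ^ 2) = (2 * h * a) ^ 2 - D * (h * b) ^ 2 := by ring
      _ = 4 * (f₂ * x ^ 2 + f₁ * x * y + f₀ * y ^ 2)
            * (f₂ * u ^ 2 + f₁ * u * v + f₀ * v ^ 2) := by
        rw [hB, hW, hD]; ring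
      _ = 4 * h ^ 2 * 1 := by rw [hxy, huv]; ring
  have hdet : a ^ 2 - ((f₁ ^ 2 - 4 * f₂ * f₀) / 4) * b ^ 2 = 1 := hD ▸ key
  refine ⟨key, ?_, fun s t => ?_, ?_, ?_⟩
  · linear_combination hdet
  · linear_combination (f₂ * s ^ 2 + f₁ * s * t + f₀ * t ^ 2) * hdet
  · apply mul_left_cancel₀ hh
    linear_combination x / 2 * hB + (f₁ * x / 2 + f₀ * y) * hW + u * hxy
  · apply mul_left_cancel₀ hh
    linear_combination y / 2 * hB - (f₂ * x + f₁ * y / 2) * hW + v * hxy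
end

section
/- Let f(x,y) = f₂x² + f₁xy + f₀y² be a binary quadratic form with integer coefficients which is irreducible as a polynomial over ℚ. If x, y, u, v are integers with f(x,y) = f(u,v) and (x,y) ≠ (u,v), then 2f₂ux + f₁(uy + vx) + 2f₀vy ≠ 2f(x,y); equivalently, the quantity m = 2f₂ux + f₁(uy + vx) + 2f₀vy − 2f(x,y) appearing in the explicit automorphism construction is nonzero. -/
/-!
Writing `f` for the form, polarization together with `f(x,y) = f(u,v)` gives
`m = -f(x - u, y - v)`, so `m = 0` would make `(x - u, y - v)` a nonzero isotropic vector `(a, b)`.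
A form vanishing at `(a, b) ≠ 0` has the linear factor `b X - a Y` over `ℚ`, and a product of two
homogeneous linear forms is never irreducible, because units of `ℚ[X, Y]` do not vanish at the
origin.
-/

open MvPolynomial

theorem not_isUnit_linear_form (p q : ℚ) :
    ¬ IsUnit (C p * X 0 + C q * X 1 : MvPolynomial (Fin 2) ℚ) := by
  intro h
  have h0 := h.map (eval (fun _ : Fin 2 => (0 : ℚ)))
  simp at h0

theorem not_irreducible_of_coeffs {f₂ f₁ f₀ : ℚ} (p q r s : ℚ)
    (h₂ : f₂ = p * r) (h₁ : f₁ = p * s + q * r) (h₀ : f₀ = q * s) :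
    ¬ Irreducible (C f₂ * X 0 ^ 2 + C f₁ * X 0 * X 1 + C f₀ * X 1 ^ 2 :
      MvPolynomial (Fin 2) ℚ) := by
  intro h
  have hfac : (C f₂ * X 0 ^ 2 + C f₁ * X 0 * X 1 + C f₀ * X 1 ^ 2 : MvPolynomial (Fin 2) ℚ)
      = (C p * X 0 + C q * X 1) * (C r * X 0 + C s * X 1) := by
    rw [h₂, h₁, h₀]
    simp only [C_mul, C_add]
    ring
  rcases h.isUnit_or_isUnit hfac with hu | hu
  · exact not_isUnit_linear_form p q hu
  · exact not_isUnit_linear_form r s hu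

/-- An irreducible binary quadratic form over `ℚ` is anisotropic. -/
theorem eq_zero_of_irreducible {f₂ f₁ f₀ : ℚ}
    (hirr : Irreducible (C f₂ * X 0 ^ 2 + C f₁ * X 0 * X 1 + C f₀ * X 1 ^ 2 :
      MvPolynomial (Fin 2) ℚ))
    {a b : ℚ} (h : f₂ * a ^ 2 + f₁ * a * b + f₀ * b ^ 2 = 0) : a = 0 ∧ b = 0 := by
  by_cases hb : b = 0
  · refine ⟨?_, hb⟩
    by_contra ha
    have h₂ : f₂ = 0 := by simpa [hb, ha] using h
    exact not_irreducible_of_coeffs 0 1 f₁ f₀ (by simp [h₂]) (by ring) (by ring) hirr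
  · exfalso
    refine not_irreducible_of_coeffs b (-a) (f₂ / b) ((f₁ + a * f₂ / b) / b) ?_ ?_ ?_ hirr
    · field_simp
    · field_simp
      ring
    · field_simp
      linear_combination h

/-- For an irreducible binary quadratic form, distinct integral representations of the
same integer have `m = 2f₂ux + f₁(uy+vx) + 2f₀vy − 2f(x,y)` nonzero. -/
theorem m_nonzero_of_distinct_representations (f₂ f₁ f₀ : ℤ)
    (hirr : Irreducible
      (C (f₂ : ℚ) * X 0 ^ 2 + C (f₁ : ℚ) * X 0 * X 1 + C (f₀ : ℚ) * X 1 ^ 2 :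
        MvPolynomial (Fin 2) ℚ))
    (x y u v : ℤ)
    (hrep : f₂ * x ^ 2 + f₁ * x * y + f₀ * y ^ 2 = f₂ * u ^ 2 + f₁ * u * v + f₀ * v ^ 2)
    (hne : (x, y) ≠ (u, v)) :
    2 * f₂ * u * x + f₁ * (u * y + v * x) + 2 * f₀ * v * y
      ≠ 2 * (f₂ * x ^ 2 + f₁ * x * y + f₀ * y ^ 2) := by
  intro hm
  have hq : (f₂ : ℚ) * ((x - u : ℤ) : ℚ) ^ 2 + (f₁ : ℚ) * ((x - u : ℤ) : ℚ) * ((y - v : ℤ) : ℚ)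
      + (f₀ : ℚ) * ((y - v : ℤ) : ℚ) ^ 2 = 0 := by
    have hz : f₂ * (x - u) ^ 2 + f₁ * (x - u) * (y - v) + f₀ * (y - v) ^ 2 = 0 := by
      linear_combination -hm - hrep
    exact_mod_cast hz
  obtain ⟨ha, hb⟩ := eq_zero_of_irreducible hirr hq
  exact hne (Prod.ext (sub_eq_zero.mp (Int.cast_eq_zero.mp ha))
    (sub_eq_zero.mp (Int.cast_eq_zero.mp hb)))
end
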